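/- Let φ : S¹ → ℝ be a C^∞ function whose critical points on the circle are exactly n nondegenerate local extremum points with pairwise distinct values, and define a marking ν of these nodes by: ν(p) = +1 if p is a local maximum of φ or the point where φ attains its absolute minimum, and ν(p) = −1 otherwise. Then γ((φ, ν)) = 0; that is, the ribbon (φ, ν) admits an extension with no critical points in the open unit disk. -/

import Mathlib

open scoped RealInnerProductSpace

noncomputable section

abbrev E2 : Type := EuclideanSpace ℝ (Fin 2)

/-- The point (cos t, sin t) on the unit circle in ℝ². -/
def sphPt (t : ℝ) : E2 := (EuclideanSpace.equiv (Fin 2) ℝ).symm ![Real.cos t, Real.sin t]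

/-- A ribbon with `n` nodes, encoded via the angle parametrization `g = φ ∘ (cos, sin)`
of a C^∞ function `φ : S¹ → ℝ` whose critical points on the circle are exactly the `n`
nondegenerate local extrema (nodes) at angles `θ 0 < θ 1 < ⋯ < θ (n-1)` in `[0, 2π)`,
with pairwise distinct critical values, together with a marking `ν` of the nodes by `±1`. -/
structure Ribbon (n : ℕ) : Type where
  g : ℝ → ℝ
  θ : Fin n → ℝ
  ν : Fin n → ℤ
  n_even : Even n
  n_pos : 0 < n
  smooth_g : ContDiff ℝ (⊤ : ℕ∞) g
  periodic_g : Function.Periodic g (2 * Real.pi)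
  theta_mem : ∀ i, θ i ∈ Set.Ico (0 : ℝ) (2 * Real.pi)
  theta_mono : StrictMono θ
  node_crit : ∀ i, deriv g (θ i) = 0
  node_nondeg : ∀ i, deriv (deriv g) (θ i) ≠ 0
  crit_only : ∀ t ∈ Set.Ico (0 : ℝ) (2 * Real.pi), deriv g t = 0 → ∃ i, t = θ i
  values_distinct : ∀ i j, g (θ i) = g (θ j) → i = j
  nu_sign : ∀ i, ν i = 1 ∨ ν i = -1

/-- The signature σ = s₊ − s₋ of a ribbon. -/
def Ribbon.sigma {n : ℕ} (a : Ribbon n) : ℤ := ∑ i, a.ν i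

/-- Critical points of `f` in the open unit disk. -/
def critPts (f : E2 → ℝ) : Set E2 :=
  {x | x ∈ Metric.ball (0 : E2) 1 ∧ fderiv ℝ f x = 0}

/-- `f : ℝ² → ℝ` is an extension of the ribbon `a`: it is C^∞, agrees with `φ` on the unit
circle, has nowhere-vanishing gradient on the circle, and at each node the radial derivative
`⟪∇f(p), p⟫` has sign `ν p` if `p` is a local maximum of `φ` (second derivative of `g`
negative there) and sign `−ν p` if `p` is a local minimum of `φ`. -/
def IsExtension {n : ℕ} (a : Ribbon n) (f : E2 → ℝ) : Prop :=
  ContDiff ℝ (⊤ : ℕ∞) f ∧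
  (∀ t : ℝ, f (sphPt t) = a.g t) ∧
  (∀ x ∈ Metric.sphere (0 : E2) 1, fderiv ℝ f x ≠ 0) ∧
  (∀ i : Fin n,
    (deriv (deriv a.g) (a.θ i) < 0 →
      0 < (a.ν i : ℝ) * ⟪gradient f (sphPt (a.θ i)), sphPt (a.θ i)⟫) ∧
    (0 < deriv (deriv a.g) (a.θ i) →
      (a.ν i : ℝ) * ⟪gradient f (sphPt (a.θ i)), sphPt (a.θ i)⟫ < 0))

/-- The ribbon invariant γ: the infimum, over all extensions `f` of `a`, of the number of
critical points of `f` in the open unit disk (a value in `ℕ∞`). -/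
def gammaR {n : ℕ} (a : Ribbon n) : ℕ∞ :=
  sInf {k : ℕ∞ | ∃ f : E2 → ℝ, IsExtension a f ∧ (critPts f).encard = k}

open scoped ContDiff in
lemma hadI_deriv (m : ℕ) (h : ℝ → ℝ) (hh : ContDiff ℝ ∞ h) (x : ℝ) :
    HasDerivAt (fun x => ∫ t in (0:ℝ)..1, t ^ m * h (t * x))
      (∫ t in (0:ℝ)..1, t ^ (m+1) * deriv h (t * x)) x := by
  have hc : Continuous h := hh.continuous
  have hd : Continuous (deriv h) := (contDiff_infty_iff_deriv.1 hh).2.continuous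
  obtain ⟨C, hC⟩ := (isCompact_Icc (a := -(|x|+1)) (b := |x|+1)).exists_bound_of_continuousOn
    hd.continuousOn
  refine (intervalIntegral.hasDerivAt_integral_of_dominated_loc_of_deriv_le
    (bound := fun _ => C) (s := Metric.ball x 1)
    (F := fun x t => t ^ m * h (t * x)) (F' := fun x t => t ^ (m+1) * deriv h (t * x))
    (Metric.ball_mem_nhds x one_pos) ?_ ?_ ?_ ?_ ?_ ?_).2
  · exact Filter.Eventually.of_forall fun y => Continuous.aestronglyMeasurable (by fun_prop)
  · exact Continuous.intervalIntegrable (by fun_prop) _ _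
  · exact Continuous.aestronglyMeasurable (by fun_prop)
  · refine Filter.Eventually.of_forall fun t ht y hy => ?_
    rw [Set.uIoc_of_le zero_le_one] at ht
    have hy' : |y| ≤ |x| + 1 := by
      have h1 : |y - x| < 1 := by simpa [Real.dist_eq] using hy
      have h2 := abs_add_le (y - x) x
      simp only [sub_add_cancel] at h2
      linarith
    have h3 : |t * y| ≤ |x| + 1 := by
      rw [abs_mul, abs_of_pos ht.1]
      nlinarith [abs_nonneg y, ht.1, ht.2]
    have h4 := hC (t * y) (by rwa [Set.mem_Icc, ← abs_le])
    rw [norm_mul, norm_pow, Real.norm_of_nonneg ht.1.le]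
    have h5 : t ^ (m+1) ≤ 1 := pow_le_one₀ ht.1.le ht.2
    have h6 : 0 ≤ t ^ (m+1) := pow_nonneg ht.1.le _
    nlinarith [norm_nonneg (deriv h (t * y))]
  · exact Continuous.intervalIntegrable (by fun_prop) _ _
  · refine Filter.Eventually.of_forall fun t ht y hy => ?_
    have h1 : HasDerivAt h (deriv h (t * y)) (t * y) :=
      ((contDiff_infty_iff_deriv.1 hh).1 _).hasDerivAt
    have h2 : HasDerivAt (fun y : ℝ => t * y) t y := by
      simpa using (hasDerivAt_id y).const_mul t
    have := (h1.comp y h2).const_mul (t ^ m)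
    exact this.congr_deriv (by ring)

open scoped ContDiff in
lemma hadI_contDiff (n : ℕ) : ∀ (m : ℕ) (h : ℝ → ℝ) (_ : ContDiff ℝ ∞ h),
    ContDiff ℝ n (fun x => ∫ t in (0:ℝ)..1, t ^ m * h (t * x)) := by
  induction n with
  | zero =>
    intro m h hh
    exact contDiff_zero.2 (continuous_iff_continuousAt.2 fun x =>
      (hadI_deriv m h hh x).continuousAt)
  | succ n ih =>
    intro m h hh
    have : ((n+1 : ℕ) : WithTop ℕ∞) = (n : WithTop ℕ∞) + 1 := by norm_cast
    rw [this, contDiff_succ_iff_deriv]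
    refine ⟨fun x => (hadI_deriv m h hh x).differentiableAt, ?_, ?_⟩
    · intro h; exact absurd h (by simp)
    · rw [show deriv (fun x => ∫ t in (0:ℝ)..1, t ^ m * h (t * x)) = _ from
        funext fun x => (hadI_deriv m h hh x).deriv]
      exact ih (m+1) (deriv h) (contDiff_infty_iff_deriv.1 hh).2

open scoped ContDiff in
lemma hadamard1 (h : ℝ → ℝ) (hh : ContDiff ℝ ∞ h) (h0 : h 0 = 0) :
    ∃ k : ℝ → ℝ, ContDiff ℝ ∞ k ∧ ∀ x, h x = x * k x := by
  refine ⟨fun x => ∫ t in (0:ℝ)..1, t ^ 0 * deriv h (t * x), ?_, ?_⟩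
  · exact contDiff_infty.2 fun n => hadI_contDiff n 0 _ (contDiff_infty_iff_deriv.1 hh).2
  · intro x
    have hd : Continuous (deriv h) := (contDiff_infty_iff_deriv.1 hh).2.continuous
    have key : ∫ t in (0:ℝ)..1, x * deriv h (t * x) = h (1 * x) - h (0 * x) := by
      refine intervalIntegral.integral_eq_sub_of_hasDerivAt (f := fun t => h (t * x)) ?_
        (Continuous.intervalIntegrable (by fun_prop) _ _)
      intro t _
      have h1 : HasDerivAt h (deriv h (t * x)) (t * x) :=
        ((contDiff_infty_iff_deriv.1 hh).1 _).hasDerivAt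
      have h2 : HasDerivAt (fun t : ℝ => t * x) x t := by
        simpa using (hasDerivAt_id t).mul_const x
      have := h1.comp t h2
      exact this.congr_deriv (by ring)
    rw [intervalIntegral.integral_const_mul] at key
    simp only [pow_zero, one_mul, zero_mul, h0, sub_zero] at key ⊢
    exact key.symm

open scoped ContDiff in
/-- The quotient of a function with a strict nondegenerate minimum by `1 - cos`. -/
lemma exists_quot (G : ℝ → ℝ) (hG : ContDiff ℝ ∞ G) (hper : Function.Periodic G (2 * Real.pi))
    (h0 : G 0 = 0) (hpos : ∀ s, 0 ≤ G s) (hstrict : ∀ s, G s = 0 → Real.cos s = 1)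
    (hnd : deriv (deriv G) 0 ≠ 0) :
    0 < deriv (deriv G) 0 ∧ ∃ ψ : ℝ → ℝ, ContDiff ℝ ∞ ψ ∧ Function.Periodic ψ (2 * Real.pi) ∧
      (∀ s, 0 < ψ s) ∧ ∀ s, G s = (1 - Real.cos s) * ψ s := by
  obtain ⟨k1, hk1, hGk⟩ := hadamard1 G hG h0
  have hdG0 : deriv G 0 = 0 :=
    IsLocalMin.deriv_eq_zero (Filter.Eventually.of_forall fun s => by rw [h0]; exact hpos s)
  have hdiff : ∀ {f : ℝ → ℝ}, ContDiff ℝ ∞ f → ∀ x, HasDerivAt f (deriv f x) x :=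
    fun hf x => ((contDiff_infty_iff_deriv.1 hf).1 x).hasDerivAt
  have hdG : ∀ x, deriv G x = k1 x + x * deriv k1 x := by
    intro x
    have : HasDerivAt (fun x => x * k1 x) (1 * k1 x + x * deriv k1 x) x :=
      (hasDerivAt_id x).mul (hdiff hk1 x)
    rw [← funext hGk] at this
    rw [this.deriv]; ring
  have hk10 : k1 0 = 0 := by have := hdG 0; simpa [hdG0] using this.symm
  obtain ⟨K, hK, hkK⟩ := hadamard1 k1 hk1 hk10
  have hk1d0 : deriv k1 0 = K 0 := by
    have : HasDerivAt (fun x => x * K x) (1 * K 0 + 0 * deriv K 0) 0 :=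
      (hasDerivAt_id 0).mul (hdiff hK 0)
    rw [← funext hkK] at this
    rw [this.deriv]; ring
  have hk1' : ContDiff ℝ ∞ (deriv k1) := (contDiff_infty_iff_deriv.1 hk1).2
  have hddG : deriv (deriv G) 0 = 2 * K 0 := by
    have : HasDerivAt (fun x => k1 x + x * deriv k1 x)
        (deriv k1 0 + (1 * deriv k1 0 + 0 * deriv (deriv k1) 0)) 0 :=
      (hdiff hk1 0).add ((hasDerivAt_id 0).mul (hdiff hk1' 0))
    rw [← funext hdG] at this
    rw [this.deriv, hk1d0]; ring
  have hGK : ∀ s, G s = s ^ 2 * K s := fun s => by rw [hGk, hkK]; ring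
  have hK0 : 0 < K 0 := by
    have h1 : K 0 ≠ 0 := fun h => hnd (by rw [hddG, h, mul_zero])
    refine lt_of_le_of_ne ?_ h1.symm
    have ht : Filter.Tendsto K (nhdsWithin 0 {0}ᶜ) (nhds (K 0)) :=
      hK.continuous.continuousAt.tendsto.mono_left nhdsWithin_le_nhds
    refine ge_of_tendsto ht ?_
    filter_upwards [self_mem_nhdsWithin] with s hs
    have hs' : 0 < s ^ 2 := by have : s ≠ 0 := hs; positivity
    have := hpos s
    rw [hGK] at this
    exact nonneg_of_mul_nonneg_right this hs'
  obtain ⟨l, hl, hsl⟩ := hadamard1 (fun s => Real.sin (s / 2))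
    (Real.contDiff_sin.comp (contDiff_id.div_const 2)) (by simp)
  have hl0 : l 0 = 1 / 2 := by
    have : HasDerivAt (fun x => x * l x) (1 * l 0 + 0 * deriv l 0) 0 :=
      (hasDerivAt_id 0).mul (hdiff hl 0)
    rw [← funext hsl] at this
    have h2 : HasDerivAt (fun s : ℝ => Real.sin (s / 2)) (Real.cos (0 / 2) * (1 / 2)) 0 :=
      ((hasDerivAt_id (0:ℝ)).div_const 2).sin
    have := this.unique h2
    simpa using this
  have hcos : ∀ s, 1 - Real.cos s = 2 * s ^ 2 * l s ^ 2 := by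
    intro s
    have h1 := Real.cos_sq (s / 2)
    have h2 := Real.sin_sq_add_cos_sq (s / 2)
    rw [show 2 * (s / 2) = s by ring] at h1
    have h3 : Real.sin (s / 2) = s * l s := hsl s
    rw [h3] at h2
    nlinarith
  refine ⟨by rw [hddG]; linarith, ?_⟩
  classical
  let ψ : ℝ → ℝ := fun s => if Real.cos s = 1 then 2 * K 0 else G s / (1 - Real.cos s)
  have hψper : Function.Periodic ψ (2 * Real.pi) := by
    intro s
    simp only [ψ, Real.cos_add_two_pi, hper s]
  have hG1 : ∀ s, Real.cos s = 1 → G s = 0 := by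
    intro s hs
    obtain ⟨n, hn⟩ := (Real.cos_eq_one_iff s).1 hs
    rw [← hn, hper.int_mul_eq n]
    exact h0
  have hψ0 : ContDiffAt ℝ ∞ ψ 0 := by
    have h1 : ContDiffAt ℝ ∞ (fun s => K s / (2 * l s ^ 2)) 0 := by
      refine ContDiffAt.div hK.contDiffAt ?_ (by rw [hl0]; norm_num)
      exact (contDiff_const.mul (hl.pow 2)).contDiffAt
    refine h1.congr_of_eventuallyEq ?_
    have hne : ∀ᶠ s in nhds (0:ℝ), l s ≠ 0 :=
      hl.continuous.continuousAt.eventually_ne (by rw [hl0]; norm_num)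
    filter_upwards [hne] with s hs
    by_cases hs0 : s = 0
    · subst hs0
      simp only [ψ, Real.cos_zero, if_true, hl0]; ring
    · have : 1 - Real.cos s ≠ 0 := by rw [hcos]; positivity
      have h2 : Real.cos s ≠ 1 := fun h => this (by rw [h]; ring)
      simp only [ψ, h2, if_false]
      rw [hcos, hGK]
      field_simp
  refine ⟨ψ, ?_, hψper, ?_, ?_⟩
  · rw [contDiff_iff_contDiffAt]
    intro s
    by_cases hs : Real.cos s = 1
    · obtain ⟨n, hn⟩ := (Real.cos_eq_one_iff s).1 hs
      have h1 : ψ = fun x => ψ (x - n * (2 * Real.pi)) := by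
        funext x
        exact (hψper.sub_int_mul_eq n).symm
      rw [h1]
      refine ContDiffAt.comp s (g := ψ) ?_ (contDiffAt_id.sub contDiffAt_const)
      simpa [← hn] using hψ0
    · have h1 : ContDiffAt ℝ ∞ (fun s => G s / (1 - Real.cos s)) s :=
        ContDiffAt.div hG.contDiffAt (contDiff_const.sub Real.contDiff_cos).contDiffAt
          (fun h => hs (by linarith))
      refine h1.congr_of_eventuallyEq ?_
      filter_upwards [Real.continuous_cos.continuousAt.eventually_ne hs] with x hx
      simp only [ψ, hx, if_false]
  · intro s
    by_cases hs : Real.cos s = 1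
    · simp only [ψ, hs, if_true]; linarith
    · simp only [ψ, hs, if_false]
      have h1 : 0 < G s := lt_of_le_of_ne (hpos s) fun h => hs (hstrict s h.symm)
      have h2 : Real.cos s < 1 := lt_of_le_of_ne (Real.cos_le_one s) hs
      exact div_pos h1 (by linarith)
  · intro s
    by_cases hs : Real.cos s = 1
    · rw [hG1 s hs, hs]; ring
    · simp only [ψ, hs, if_false]
      have : 1 - Real.cos s ≠ 0 := fun h => hs (by linarith)
      field_simp

open scoped ContDiff in
lemma exists_k (δ : ℝ) (hδ : 0 < δ) : ∃ k b : ℝ → ℝ, ContDiff ℝ ∞ k ∧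
    (∀ r, HasDerivAt k (b r) r) ∧ (∀ r, 0 ≤ b r ∧ b r ≤ 1) ∧ (∀ r, r ≤ δ → k r = r) ∧
    (∀ r, 0 ≤ r → 0 ≤ k r ∧ k r ≤ 2 * δ) := by
  let b : ℝ → ℝ := fun r => Real.smoothTransition (2 - r / δ)
  have hb : ContDiff ℝ ∞ b :=
    Real.smoothTransition.contDiff.comp (contDiff_const.sub (contDiff_id.div_const δ))
  have hbc := hb.continuous
  let k : ℝ → ℝ := fun r => ∫ t in (0:ℝ)..r, b t
  have hk : ∀ r, HasDerivAt k (b r) r := fun r =>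
    intervalIntegral.integral_hasDerivAt_right (hbc.intervalIntegrable _ _)
      (hbc.stronglyMeasurableAtFilter _ _) hbc.continuousAt
  have hb01 : ∀ r, 0 ≤ b r ∧ b r ≤ 1 := fun r =>
    ⟨Real.smoothTransition.nonneg _, Real.smoothTransition.le_one _⟩
  have hb1 : ∀ r, r ≤ δ → b r = 1 := fun r hr =>
    Real.smoothTransition.one_of_one_le (by have := (div_le_one hδ).2 hr; linarith)
  have hb2 : ∀ r, 2 * δ ≤ r → b r = 0 := fun r hr =>
    Real.smoothTransition.zero_of_nonpos (by have := (le_div_iff₀ hδ).2 hr; linarith)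
  have hmono : Monotone k := monotone_of_deriv_nonneg (fun r => (hk r).differentiableAt)
    (fun r => by rw [(hk r).deriv]; exact (hb01 r).1)
  have hk0 : k 0 = 0 := by simp [k]
  have hle : ∀ r, 0 ≤ r → k r ≤ r := by
    intro r hr
    have hm : Monotone (fun r => r - k r) := by
      have hd : ∀ r, HasDerivAt (fun r => r - k r) (1 - b r) r :=
        fun r => (hasDerivAt_id r).sub (hk r)
      exact monotone_of_deriv_nonneg (fun r => (hd r).differentiableAt)
        (fun r => by rw [(hd r).deriv]; linarith [(hb01 r).2])
    have := hm hr
    simp only [hk0] at this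
    linarith
  refine ⟨k, b, ?_, hk, hb01, ?_, ?_⟩
  · rw [contDiff_infty_iff_deriv]
    refine ⟨fun r => (hk r).differentiableAt, ?_⟩
    rw [show deriv k = b from funext fun r => (hk r).deriv]
    exact hb
  · intro r hr
    have : ∫ t in (0:ℝ)..r, b t = ∫ t in (0:ℝ)..r, (1:ℝ) := by
      refine intervalIntegral.integral_congr fun t ht => ?_
      refine hb1 t ?_
      rcases Set.mem_uIcc.1 ht with h | h <;> linarith [h.1, h.2]
    simp only [k, this]
    simp
  · intro r hr
    refine ⟨by rw [← hk0]; exact hmono hr, ?_⟩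
    rcases le_total r (2 * δ) with h | h
    · exact (hle r hr).trans h
    · have h1 : k r = k (2 * δ) := by
        have h2 : k (2 * δ) + ∫ t in (2 * δ)..r, b t = k r :=
          intervalIntegral.integral_add_adjacent_intervals (hbc.intervalIntegrable _ _)
            (hbc.intervalIntegrable _ _)
        have h3 : ∫ t in (2 * δ)..r, b t = ∫ t in (2 * δ)..r, (0:ℝ) := by
          refine intervalIntegral.integral_congr fun t ht => ?_
          rw [Set.uIcc_of_le h] at ht
          exact hb2 t ht.1
        rw [h3] at h2
        simpa using h2.symm
      rw [h1]
      exact hle _ (by linarith)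

lemma per_eq_of_exp {ψ : ℝ → ℝ} (hper : Function.Periodic ψ (2 * Real.pi)) {A B : ℝ}
    (h : Complex.exp (A * Complex.I) = Complex.exp (B * Complex.I)) : ψ A = ψ B := by
  obtain ⟨n, hn⟩ := Complex.exp_eq_exp_iff_exists_int.1 h
  have : A = B + n * (2 * Real.pi) := by
    have := congrArg Complex.im hn
    simpa using this
  rw [this]
  exact hper.int_mul n B

lemma exp_arg_eq {w : ℂ} (hw : w ≠ 0) :
    Complex.exp (w.arg * Complex.I) = w / (‖w‖ : ℂ) := by
  have h := Complex.norm_mul_exp_arg_mul_I w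
  have h1 : (‖w‖ : ℂ) ≠ 0 := by simpa using hw
  rw [eq_div_iff h1, mul_comm]
  exact h

open scoped ContDiff in
lemma contDiffAt_arg' {w : ℂ} (hw : w ∈ Complex.slitPlane) :
    ContDiffAt ℝ ∞ Complex.arg w := by
  have h1 : ContDiffAt ℝ ∞ Complex.log w := (Complex.contDiffAt_log hw).restrict_scalars ℝ
  have h2 : ContDiffAt ℝ ∞ (fun w => Complex.imCLM (Complex.log w)) w :=
    Complex.imCLM.contDiff.contDiffAt.comp w h1
  simpa [Complex.log_im] using h2

open scoped ContDiff in
lemma contDiffAt_per_arg {ψ : ℝ → ℝ} (hψ : ContDiff ℝ ∞ ψ)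
    (hper : Function.Periodic ψ (2 * Real.pi)) {w : ℂ} (hw : w ≠ 0) :
    ContDiffAt ℝ ∞ (fun w : ℂ => ψ w.arg) w := by
  rcases Complex.mem_slitPlane_or_neg_mem_slitPlane hw with h | h
  · exact hψ.contDiffAt.comp w (contDiffAt_arg' h)
  · have h1 : ContDiffAt ℝ ∞ (fun w : ℂ => (-w).arg + Real.pi) w :=
      ((contDiffAt_arg' h).comp w contDiffAt_id.neg).add contDiffAt_const
    have h2 : ContDiffAt ℝ ∞ (fun w : ℂ => ψ ((-w).arg + Real.pi)) w :=
      hψ.contDiffAt.comp w h1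
    refine h2.congr_of_eventuallyEq ?_
    filter_upwards [continuousAt_id.eventually_ne hw] with x hx
    have hx : x ≠ 0 := hx
    refine per_eq_of_exp hper ?_
    have hx' : -x ≠ 0 := neg_ne_zero.2 hx
    rw [Complex.ofReal_add, add_mul, Complex.exp_add, exp_arg_eq hx, exp_arg_eq hx',
      Complex.exp_pi_mul_I, norm_neg]
    ring

open scoped ContDiff in
lemma core (ψ : ℝ → ℝ) (hψ : ContDiff ℝ ∞ ψ) (hper : Function.Periodic ψ (2 * Real.pi))
    (hpos : ∀ s, 0 < ψ s) :
    ∃ F : ℂ → ℝ, ContDiff ℝ ∞ F ∧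
      (∀ τ : ℝ, F (Complex.exp (τ * Complex.I)) = (1 + Real.cos τ) * ψ τ) ∧
      (∀ w : ℂ, ‖w‖ ≤ 1 → w ≠ -1 → 0 < fderiv ℝ F w (w + 1)) ∧
      0 < fderiv ℝ F (-1) 1 := by
  -- lower bound
  obtain ⟨m, hm, hmψ⟩ : ∃ m, 0 < m ∧ ∀ s, m ≤ ψ s := by
    obtain ⟨x, hx, hmin⟩ := (isCompact_Icc (a := (0:ℝ)) (b := 2 * Real.pi)).exists_isMinOn
      ⟨0, by simp [Real.pi_pos.le]⟩ hψ.continuous.continuousOn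
    refine ⟨ψ x, hpos x, fun s => ?_⟩
    obtain ⟨y, hy, hy'⟩ := hper.exists_mem_Ico₀ Real.two_pi_pos s
    rw [hy']
    exact hmin ⟨hy.1, hy.2.le⟩
  -- the local extension
  let E : ℂ → ℝ := fun w =>
    m + Real.smoothTransition (2 * ‖w‖ ^ 2 - 1) * (ψ w.arg - m)
  have hE : ContDiff ℝ ∞ E := by
    rw [contDiff_iff_contDiffAt]
    intro w
    by_cases hw : w = 0
    · subst hw
      refine (contDiffAt_const (c := m)).congr_of_eventuallyEq ?_
      filter_upwards [Metric.ball_mem_nhds (0:ℂ) (show (0:ℝ) < 1/2 by norm_num)] with x hx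
      have hx : ‖x‖ < 1/2 := by simpa using hx
      have : Real.smoothTransition (2 * ‖x‖ ^ 2 - 1) = 0 :=
        Real.smoothTransition.zero_of_nonpos (by nlinarith [norm_nonneg x])
      simp only [E, this]; ring
    · have h1 : ContDiffAt ℝ ∞ (fun w : ℂ => Real.smoothTransition (2 * ‖w‖ ^ 2 - 1)) w := by
        refine Real.smoothTransition.contDiff.contDiffAt.comp w ?_
        exact (contDiffAt_const.mul (contDiff_norm_sq ℝ).contDiffAt).sub contDiffAt_const
      exact contDiffAt_const.add (h1.mul ((contDiffAt_per_arg hψ hper hw).sub contDiffAt_const))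
  have hEm : ∀ w, m ≤ E w := by
    intro w
    have h1 := Real.smoothTransition.nonneg (2 * ‖w‖ ^ 2 - 1)
    have h2 := hmψ w.arg
    have := mul_nonneg h1 (sub_nonneg.2 h2)
    simp only [E]; linarith
  have hEc : ∀ τ : ℝ, E (Complex.exp (τ * Complex.I)) = ψ τ := by
    intro τ
    have h1 : ‖Complex.exp (τ * Complex.I)‖ = 1 := Complex.norm_exp_ofReal_mul_I τ
    have h2 : ψ (Complex.exp (τ * Complex.I)).arg = ψ τ := by
      refine per_eq_of_exp hper ?_
      rw [exp_arg_eq (Complex.exp_ne_zero _), h1]; simp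
    have h3 : Real.smoothTransition (2 * 1 ^ 2 - 1) = 1 :=
      Real.smoothTransition.one_of_one_le (by norm_num)
    simp only [E, h1, h2, h3]; ring
  have hEd : ∀ w, HasFDerivAt E (fderiv ℝ E w) w := fun w =>
    (hE.differentiable (by simp) w).hasFDerivAt
  obtain ⟨C, hC⟩ := (isCompact_closedBall (0:ℂ) 1).exists_bound_of_continuousOn
    (hE.continuous_fderiv (by simp)).continuousOn
  have hC0 : 0 ≤ C := (norm_nonneg _).trans (hC 0 (by simp))
  let δ := m / (4 * (C + 1))
  have hδ : 0 < δ := by positivity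
  have hδC : 2 * δ * C < m := by
    have : δ * (4 * (C + 1)) = m := by simp only [δ]; field_simp
    nlinarith
  obtain ⟨k, b, hk, hkb, hb, hk1, hk2⟩ := exists_k δ hδ
  -- the ray-constant function
  let P : ℂ → ℝ := fun z => ψ (2 * z.arg)
  have hP : ∀ z : ℂ, z ≠ 0 → ContDiffAt ℝ ∞ P z := by
    intro z hz
    refine contDiffAt_per_arg (ψ := fun s => ψ (2 * s)) (hψ.comp (contDiff_const.mul contDiff_id))
      ?_ hz
    intro s
    show ψ (2 * (s + 2 * Real.pi)) = ψ (2 * s)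
    rw [show 2 * (s + 2 * Real.pi) = 2 * s + (2:ℤ) * (2 * Real.pi) by push_cast; ring]
    exact hper.int_mul 2 _
  let Q : ℂ → ℝ := fun z => (k ‖z‖ - ‖z‖) / ‖z‖
  let F : ℂ → ℝ := fun w => (w + 1).re * (E w + Q (w + 1) * (E w - P (w + 1)))
  have hQ0 : ∀ z : ℂ, ‖z‖ ≤ δ → Q z = 0 := by
    intro z hz
    simp only [Q, hk1 _ hz]; simp
  have hre : ContDiff ℝ ∞ (fun w : ℂ => (w + 1).re) :=
    Complex.reCLM.contDiff.comp (contDiff_id.add contDiff_const)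
  have hF : ContDiff ℝ ∞ F := by
    rw [contDiff_iff_contDiffAt]
    intro w
    refine hre.contDiffAt.mul (hE.contDiffAt.add ?_)
    have hadd : ContDiffAt ℝ ∞ (fun w : ℂ => w + 1) w := contDiffAt_id.add contDiffAt_const
    by_cases hw : w + 1 = 0
    · refine (contDiffAt_const (c := (0:ℝ))).congr_of_eventuallyEq ?_
      have : ∀ᶠ x in nhds w, ‖x + 1‖ < δ := by
        have hc : ContinuousAt (fun x : ℂ => ‖x + 1‖) w := by fun_prop
        exact hc.eventually_lt continuousAt_const (by rw [hw]; simpa using hδ)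
      filter_upwards [this] with x hx
      rw [hQ0 _ hx.le]; ring
    · have hn : ContDiffAt ℝ ∞ (fun w : ℂ => ‖w + 1‖) w :=
        (contDiffAt_norm ℝ hw).comp w hadd
      have h1 : ContDiffAt ℝ ∞ (fun w : ℂ => Q (w + 1)) w :=
        ((hk.contDiffAt.comp w hn).sub hn).div hn (by simpa using hw)
      exact h1.mul (hE.contDiffAt.sub (ContDiffAt.comp (g := P) w (hP _ hw) hadd))
  have hFd : ∀ w, HasFDerivAt F (fderiv ℝ F w) w := fun w =>
    (hF.differentiable (by simp) w).hasFDerivAt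
  have hline : ∀ (z : ℂ) (s : ℝ), HasDerivAt (fun s : ℝ => -1 + (s : ℂ) * z) z s := by
    intro z s
    have := ((Complex.ofRealCLM.hasDerivAt (x := s)).mul_const z).const_add (-1 : ℂ)
    simpa using this
  refine ⟨F, hF, ?_, ?_, ?_⟩
  · intro τ
    have hre' : (Complex.exp (τ * Complex.I) + 1).re = 1 + Real.cos τ := by
      rw [Complex.add_re, Complex.exp_ofReal_mul_I_re, Complex.one_re, add_comm]
    simp only [F, hre', hEc]
    by_cases hz : Complex.exp (τ * Complex.I) + 1 = 0
    · rw [hQ0 _ (by rw [hz]; simpa using hδ.le)]; ring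
    · have : P (Complex.exp (τ * Complex.I) + 1) = ψ τ := by
        refine per_eq_of_exp hper ?_
        set w := Complex.exp (τ * Complex.I) with hw
        have hnw : ‖w‖ = 1 := Complex.norm_exp_ofReal_mul_I τ
        have hww : w * (starRingEnd ℂ) w = 1 := by
          rw [Complex.mul_conj, Complex.normSq_eq_norm_sq, hnw]; simp
        have hz2 : ((‖w + 1‖ : ℝ) : ℂ) ^ 2 = (w + 1) * ((starRingEnd ℂ) w + 1) := by
          have := Complex.mul_conj (w + 1)
          rw [Complex.normSq_eq_norm_sq] at this
          rw [← Complex.ofReal_pow, ← this]; simp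
        have hnz : ((‖w + 1‖ : ℝ) : ℂ) ≠ 0 := by simpa using hz
        rw [show (((2 * (w + 1).arg : ℝ) : ℂ) * Complex.I)
            = (w + 1).arg * Complex.I + (w + 1).arg * Complex.I by push_cast; ring,
          Complex.exp_add, exp_arg_eq hz]
        rw [div_mul_div_comm, div_eq_iff (mul_ne_zero hnz hnz), ← pow_two, ← pow_two, hz2]
        linear_combination (-(w + 1)) * hww
      rw [this]; ring
  · intro w hw1 hw
    set z := w + 1 with hz
    have hz0 : z ≠ 0 := fun h => hw (by rw [hz] at h; exact eq_neg_of_add_eq_zero_left h)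
    have hr : 0 < ‖z‖ := norm_pos_iff.2 hz0
    have hzre : 0 < z.re := by
      have h1 : ‖w‖ ^ 2 ≤ 1 := by nlinarith [norm_nonneg w]
      have h2 : ‖w‖ ^ 2 = w.re ^ 2 + w.im ^ 2 := by
        rw [← Complex.normSq_eq_norm_sq, Complex.normSq_apply]; ring
      have h3 : z.re = w.re + 1 := by simp [hz]
      rw [h3]
      by_contra hcon
      have hre : w.re = -1 := by nlinarith [sq_nonneg w.im]
      have him : w.im = 0 := by
        have : w.im ^ 2 ≤ 0 := by nlinarith
        exact pow_eq_zero_iff (two_ne_zero) |>.1 (le_antisymm this (sq_nonneg _))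
      exact hw (Complex.ext (by simp [hre]) (by simp [him]))
    have hw' : (-1 : ℂ) + ((1:ℝ) : ℂ) * z = w := by simp [hz]
    -- derivative along the ray, abstractly
    have hd1 : HasDerivAt (fun s : ℝ => F (-1 + (s : ℂ) * z)) (fderiv ℝ F w z) 1 := by
      have h := hFd w
      rw [← hw'] at h
      have := h.comp_hasDerivAt (1:ℝ) (hline z 1)
      rwa [hw'] at this
    have hdE : HasDerivAt (fun s : ℝ => E (-1 + (s : ℂ) * z)) (fderiv ℝ E w z) 1 := by
      have h := hEd w
      rw [← hw'] at h
      have := h.comp_hasDerivAt (1:ℝ) (hline z 1)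
      rwa [hw'] at this
    have hdk : HasDerivAt (fun s : ℝ => k (s * ‖z‖) / ‖z‖) (b ‖z‖) 1 := by
      have h1 : HasDerivAt (fun s : ℝ => s * ‖z‖) ‖z‖ 1 := by
        simpa using (hasDerivAt_id (1:ℝ)).mul_const ‖z‖
      have h2 : HasDerivAt k (b ‖z‖) (1 * ‖z‖) := by rw [one_mul]; exact hkb _
      have := (h2.comp (1:ℝ) h1).div_const ‖z‖
      exact this.congr_deriv (by field_simp)
    have hd2 : HasDerivAt (fun s : ℝ => z.re * (k (s * ‖z‖) / ‖z‖ * E (-1 + (s : ℂ) * z)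
        + (s - k (s * ‖z‖) / ‖z‖) * P z))
        (z.re * ((b ‖z‖ * E w + k ‖z‖ / ‖z‖ * fderiv ℝ E w z) + (1 - b ‖z‖) * P z)) 1 := by
      have := ((hdk.mul hdE).add (((hasDerivAt_id (1:ℝ)).sub hdk).mul_const (P z))).const_mul z.re
      refine this.congr_deriv ?_
      rw [hw', one_mul]
    have heq : (fun s : ℝ => F (-1 + (s : ℂ) * z)) =ᶠ[nhds 1]
        (fun s : ℝ => z.re * (k (s * ‖z‖) / ‖z‖ * E (-1 + (s : ℂ) * z)
        + (s - k (s * ‖z‖) / ‖z‖) * P z)) := by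
      filter_upwards [lt_mem_nhds (show (0:ℝ) < 1 by norm_num)] with s hs
      have h1 : (-1 : ℂ) + (s : ℂ) * z + 1 = (s : ℂ) * z := by ring
      have h2 : P ((s : ℂ) * z) = P z := by simp only [P, Complex.arg_real_mul z hs]
      have h3 : ‖(s : ℂ) * z‖ = s * ‖z‖ := by
        rw [norm_mul, Complex.norm_real, Real.norm_of_nonneg hs.le]
      have h4 : ((s : ℂ) * z).re = s * z.re := by simp
      simp only [F, Q, h1, h2, h3, h4]
      field_simp
      ring
    have hval := hd1.unique (hd2.congr_of_eventuallyEq heq)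
    rw [hval]
    refine mul_pos hzre ?_
    have hkr := hk2 ‖z‖ hr.le
    have hD : |fderiv ℝ E w z| ≤ C * ‖z‖ := by
      have := (fderiv ℝ E w).le_opNorm z
      rw [Real.norm_eq_abs] at this
      exact this.trans (mul_le_mul_of_nonneg_right (hC w (by simpa using hw1)) hr.le)
    have hD2 : |k ‖z‖ / ‖z‖ * fderiv ℝ E w z| < m := by
      rw [abs_mul, abs_of_nonneg (div_nonneg hkr.1 hr.le)]
      calc k ‖z‖ / ‖z‖ * |fderiv ℝ E w z| ≤ k ‖z‖ / ‖z‖ * (C * ‖z‖) :=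
            mul_le_mul_of_nonneg_left hD (div_nonneg hkr.1 hr.le)
        _ = k ‖z‖ * C := by field_simp
        _ ≤ 2 * δ * C := mul_le_mul_of_nonneg_right hkr.2 hC0
        _ < m := hδC
    have h5 := (abs_lt.1 hD2).1
    have h6 : b ‖z‖ * m ≤ b ‖z‖ * E w := mul_le_mul_of_nonneg_left (hEm w) (hb _).1
    have h7 : (1 - b ‖z‖) * m ≤ (1 - b ‖z‖) * P z :=
      mul_le_mul_of_nonneg_left (hmψ _) (by linarith [(hb ‖z‖).2])
    linarith
  · have hw' : (-1 : ℂ) + ((0:ℝ) : ℂ) * 1 = -1 := by simp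
    have hd1 : HasDerivAt (fun s : ℝ => F (-1 + (s : ℂ) * 1)) (fderiv ℝ F (-1) 1) 0 := by
      have h := hFd (-1)
      rw [← hw'] at h
      have := h.comp_hasDerivAt (0:ℝ) (hline 1 0)
      rwa [hw'] at this
    have hdE : HasDerivAt (fun s : ℝ => E (-1 + (s : ℂ) * 1)) (fderiv ℝ E (-1) 1) 0 := by
      have h := hEd (-1)
      rw [← hw'] at h
      have := h.comp_hasDerivAt (0:ℝ) (hline 1 0)
      rwa [hw'] at this
    have hd2 : HasDerivAt (fun s : ℝ => s * E (-1 + (s : ℂ) * 1)) (E (-1)) 0 := by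
      have := (hasDerivAt_id (0:ℝ)).mul hdE
      refine this.congr_deriv ?_
      rw [hw']; simp
    have heq : (fun s : ℝ => F (-1 + (s : ℂ) * 1)) =ᶠ[nhds 0]
        (fun s : ℝ => s * E (-1 + (s : ℂ) * 1)) := by
      filter_upwards [Metric.ball_mem_nhds (0:ℝ) hδ] with s hs
      have hs : |s| < δ := by simpa using hs
      have h1 : (-1 : ℂ) + (s : ℂ) * 1 + 1 = (s : ℂ) := by ring
      have h2 : Q (s : ℂ) = 0 := hQ0 _ (by rw [Complex.norm_real]; exact hs.le)
      simp only [F, h1, h2, Complex.ofReal_re]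
      ring
    rw [hd1.unique (hd2.congr_of_eventuallyEq heq)]
    exact lt_of_lt_of_le hm (hEm _)

def cplx (α : ℝ) : E2 →L[ℝ] ℂ :=
  LinearMap.toContinuousLinearMap
    { toFun := fun x => -Complex.exp (-(α * Complex.I)) * ((x 0 : ℂ) + (x 1 : ℂ) * Complex.I)
      map_add' := by intro x y; simp; ring
      map_smul' := by intro c x; simp; ring }

lemma cplx_apply (α : ℝ) (x : E2) : cplx α x =
    -Complex.exp (-(α * Complex.I)) * ((x 0 : ℂ) + (x 1 : ℂ) * Complex.I) := rfl

lemma cplx_norm (α : ℝ) (x : E2) : ‖cplx α x‖ = ‖x‖ := by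
  rw [cplx_apply, norm_mul, norm_neg,
    show -((α : ℂ) * Complex.I) = ((-α : ℝ) : ℂ) * Complex.I by push_cast; ring,
    Complex.norm_exp_ofReal_mul_I, one_mul, Complex.norm_add_mul_I, EuclideanSpace.norm_eq]
  simp [Fin.sum_univ_two]

lemma cplx_sphPt (α t : ℝ) : cplx α (sphPt t) =
    Complex.exp (((t - α - Real.pi : ℝ) : ℂ) * Complex.I) := by
  have h0 : sphPt t 0 = Real.cos t := rfl
  have h1 : sphPt t 1 = Real.sin t := rfl
  rw [cplx_apply, h0, h1, Complex.ofReal_cos, Complex.ofReal_sin, ← Complex.exp_mul_I]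
  rw [show (((t - α - Real.pi : ℝ) : ℂ) * Complex.I)
    = -(α * Complex.I) + t * Complex.I - Real.pi * Complex.I by push_cast; ring,
    Complex.exp_sub, Complex.exp_add, Complex.exp_pi_mul_I]
  ring

lemma norm_sphPt (t : ℝ) : ‖sphPt t‖ = 1 := by
  rw [← cplx_norm 0, cplx_sphPt, Complex.norm_exp_ofReal_mul_I]

open scoped ContDiff

/-- If the marking of a ribbon `a` is defined by: a node is positive iff it is a local maximum
of `φ` (second derivative of `g` negative) or the point where `φ` attains its absolute minimum,
then `γ(a) = 0`, i.e. `a` admits an extension with no critical points in the open unit disk. -/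
theorem stmt_14 (n : ℕ) (a : Ribbon n)
    (hν : ∀ i, a.ν i = 1 ↔
      (deriv (deriv a.g) (a.θ i) < 0 ∨ ∀ t : ℝ, a.g (a.θ i) ≤ a.g t)) :
    gammaR a = 0 ∧ ∃ f : E2 → ℝ, IsExtension a f ∧ critPts f = ∅ := by
  have hg := a.smooth_g
  have hgd : ∀ t, HasDerivAt a.g (deriv a.g t) t :=
    fun t => (hg.differentiable (by simp) t).hasDerivAt
  -- every point reduces mod 2π
  have hred : ∀ t, ∃ s ∈ Set.Ico (0:ℝ) (2 * Real.pi), ∃ k : ℤ, t = s + k * (2 * Real.pi) := by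
    intro t
    obtain ⟨k, hk, -⟩ := existsUnique_add_zsmul_mem_Ico Real.two_pi_pos t 0
    refine ⟨_, by simpa using hk, -k, ?_⟩
    simp
  have hmincrit : ∀ t, (∀ s, a.g t ≤ a.g s) → ∃ i, ∃ k : ℤ, t = a.θ i + k * (2 * Real.pi) := by
    intro t ht
    obtain ⟨s, hs, k, hk⟩ := hred t
    have hts : a.g t = a.g s := by rw [hk]; exact a.periodic_g.int_mul k s
    have h1 : deriv a.g s = 0 :=
      IsLocalMin.deriv_eq_zero (Filter.Eventually.of_forall fun u => by rw [← hts]; exact ht u)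
    obtain ⟨i, hi⟩ := a.crit_only s hs h1
    exact ⟨i, k, by rw [← hi]; exact hk⟩
  obtain ⟨i0, hi0⟩ : ∃ i0, ∀ t, a.g (a.θ i0) ≤ a.g t := by
    obtain ⟨x, hx, hmin⟩ := (isCompact_Icc (a := (0:ℝ)) (b := 2 * Real.pi)).exists_isMinOn
      ⟨0, by simp [Real.pi_pos.le]⟩ hg.continuous.continuousOn
    have hxm : ∀ s, a.g x ≤ a.g s := by
      intro s
      obtain ⟨y, hy, hy'⟩ := a.periodic_g.exists_mem_Ico₀ Real.two_pi_pos s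
      rw [hy']
      exact hmin ⟨hy.1, hy.2.le⟩
    obtain ⟨i, k, hk⟩ := hmincrit x hxm
    have : a.g x = a.g (a.θ i) := by rw [hk]; exact a.periodic_g.int_mul k _
    exact ⟨i, fun t => by rw [← this]; exact hxm t⟩
  set α := a.θ i0 with hα
  have hstrict : ∀ t, a.g t = a.g α → ∃ k : ℤ, t = α + k * (2 * Real.pi) := by
    intro t ht
    obtain ⟨i, k, hk⟩ := hmincrit t (fun s => by rw [ht]; exact hi0 s)
    have h1 : a.g t = a.g (a.θ i) := by rw [hk]; exact a.periodic_g.int_mul k _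
    have : i = i0 := a.values_distinct i i0 (by rw [← h1, ht])
    subst this
    exact ⟨k, hk⟩
  -- shifted function
  let G : ℝ → ℝ := fun s => a.g (s + α) - a.g α
  have hG : ContDiff ℝ ∞ G := (hg.comp (contDiff_id.add contDiff_const)).sub contDiff_const
  have hdG : deriv G = fun s => deriv a.g (s + α) := by
    funext s
    exact (((hgd (s + α)).comp_add_const s α).sub_const _).deriv
  have hddG : deriv (deriv G) 0 = deriv (deriv a.g) α := by
    rw [hdG, deriv_comp_add_const, zero_add]
  obtain ⟨hG2, ψ, hψ, hψper, hψpos, hGψ⟩ := exists_quot G hG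
    (by intro s
        show a.g (s + 2 * Real.pi + α) - a.g α = a.g (s + α) - a.g α
        rw [show s + 2 * Real.pi + α = s + α + 2 * Real.pi by ring, a.periodic_g])
    (by simp [G]) (fun s => sub_nonneg.2 (hi0 _))
    (by intro s hs
        obtain ⟨k, hk⟩ := hstrict (s + α) (sub_eq_zero.1 hs)
        exact (Real.cos_eq_one_iff s).2 ⟨k, by linarith⟩)
    (by rw [hddG]; exact a.node_nondeg i0)
  rw [hddG] at hG2
  obtain ⟨F, hF, hFc, hFray, hF1⟩ := core (fun τ => ψ (τ + Real.pi))
    (hψ.comp (contDiff_id.add contDiff_const))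
    (by intro s
        show ψ (s + 2 * Real.pi + Real.pi) = ψ (s + Real.pi)
        rw [show s + 2 * Real.pi + Real.pi = s + Real.pi + 2 * Real.pi by ring, hψper])
    (fun s => hψpos _)
  have hFg : ∀ τ : ℝ, F (Complex.exp (τ * Complex.I)) = a.g (τ + Real.pi + α) - a.g α := by
    intro τ
    have := hGψ (τ + Real.pi)
    rw [Real.cos_add_pi, sub_neg_eq_add] at this
    rw [hFc, ← this]
  let f : E2 → ℝ := fun x => F (cplx α x) + a.g α
  have hf : ContDiff ℝ ∞ f := (hF.comp (cplx α).contDiff).add contDiff_const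
  have hFd : ∀ w, HasFDerivAt F (fderiv ℝ F w) w := fun w =>
    (hF.differentiable (by simp) w).hasFDerivAt
  have hfd : ∀ x v, fderiv ℝ f x v = fderiv ℝ F (cplx α x) (cplx α v) := by
    intro x v
    have h1 : HasFDerivAt f ((fderiv ℝ F (cplx α x)).comp (cplx α)) x :=
      ((hFd (cplx α x)).comp x (cplx α).hasFDerivAt).add_const _
    rw [h1.fderiv]; rfl
  have hp0 : cplx α (sphPt α) = -1 := by
    rw [cplx_sphPt, show ((α - α - Real.pi : ℝ) : ℂ) * Complex.I = -(Real.pi * Complex.I) by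
      push_cast; ring, Complex.exp_neg, Complex.exp_pi_mul_I]
    norm_num
  have hnocrit : ∀ x : E2, ‖x‖ ≤ 1 → fderiv ℝ f x ≠ 0 := by
    intro x hx hcrit
    by_cases hw : cplx α x = -1
    · have h1 := hfd x (-sphPt α)
      rw [hcrit, map_neg (cplx α), hp0, neg_neg, hw] at h1
      simp only [ContinuousLinearMap.zero_apply] at h1
      linarith
    · have h1 := hfd x (x - sphPt α)
      rw [hcrit, map_sub (cplx α), hp0, sub_neg_eq_add] at h1
      simp only [ContinuousLinearMap.zero_apply] at h1
      have := hFray (cplx α x) (by rw [cplx_norm]; exact hx) hw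
      linarith
  have hinner : ∀ t, ⟪gradient f (sphPt t), sphPt t⟫ = fderiv ℝ f (sphPt t) (sphPt t) := by
    intro t
    rw [gradient, InnerProductSpace.toDual_symm_apply]
  have hmin0 : fderiv ℝ f (sphPt α) (sphPt α) < 0 := by
    rw [hfd, hp0, map_neg]
    linarith
  have hother : ∀ i, i ≠ i0 → 0 < fderiv ℝ f (sphPt (a.θ i)) (sphPt (a.θ i)) := by
    intro i hi
    set t := a.θ i with ht
    rw [hfd, cplx_sphPt]
    set τ := t - α - Real.pi with hτ
    set w := Complex.exp ((τ : ℂ) * Complex.I) with hw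
    have hwre : w.re = Real.cos τ := Complex.exp_ofReal_mul_I_re τ
    have hwim : w.im = Real.sin τ := Complex.exp_ofReal_mul_I_im τ
    have hcosne : Real.cos τ ≠ -1 := by
      intro h
      have h1 : Real.cos (t - α) = 1 := by
        have : t - α = τ + Real.pi := by rw [hτ]; ring
        rw [this, Real.cos_add_pi, h]; norm_num
      obtain ⟨k, hk⟩ := (Real.cos_eq_one_iff _).1 h1
      have h2 : t = α + k * (2 * Real.pi) := by linarith
      have h3 : a.g t = a.g α := by rw [h2]; exact a.periodic_g.int_mul k _
      exact hi (a.values_distinct i i0 h3)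
    have hcos : 0 < 1 + Real.cos τ := by
      have := lt_of_le_of_ne (Real.neg_one_le_cos τ) hcosne.symm
      linarith
    have hne : w ≠ -1 := by
      intro h
      rw [h] at hwre
      exact hcosne (by simpa using hwre.symm)
    have hray := hFray w (Complex.norm_exp_ofReal_mul_I τ).le hne
    have htan : fderiv ℝ F w (w * Complex.I) = 0 := by
      have h1 : HasDerivAt (fun s : ℝ => Complex.exp ((s : ℂ) * Complex.I)) (w * Complex.I) τ := by
        have h2 : HasDerivAt (fun s : ℝ => (s : ℂ) * Complex.I) Complex.I τ := by
          simpa using (Complex.ofRealCLM.hasDerivAt (x := τ)).mul_const Complex.I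
        exact h2.cexp
      have h3 : HasDerivAt (fun s : ℝ => F (Complex.exp ((s : ℂ) * Complex.I)))
          (fderiv ℝ F w (w * Complex.I)) τ := (hFd w).comp_hasDerivAt τ h1
      rw [funext hFg] at h3
      have h4 : HasDerivAt (fun s : ℝ => a.g (s + Real.pi + α) - a.g α) 0 τ := by
        have h5 : HasDerivAt a.g 0 (τ + Real.pi + α) := by
          have : τ + Real.pi + α = t := by rw [hτ]; ring
          rw [this, ← a.node_crit i]
          exact hgd t
        have h6 : HasDerivAt (fun s : ℝ => s + Real.pi + α) 1 τ :=
          ((hasDerivAt_id τ).add_const _).add_const _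
        have := (h5.comp τ h6).sub_const (a.g α)
        exact this.congr_deriv (by ring)
      exact h3.unique h4
    have hdec : w + 1 = (1 + Real.cos τ) • w + (-Real.sin τ) • (w * Complex.I) := by
      have hsc := Real.sin_sq_add_cos_sq τ
      apply Complex.ext
      · simp only [Complex.add_re, Complex.smul_re, Complex.mul_re, Complex.I_re, Complex.I_im,
          Complex.one_re, smul_eq_mul, hwre, hwim]
        linear_combination -hsc
      · simp only [Complex.add_im, Complex.smul_im, Complex.mul_im, Complex.I_re, Complex.I_im,
          Complex.one_im, smul_eq_mul, hwre, hwim]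
        ring
    rw [hdec, map_add, map_smul, map_smul, htan, smul_zero, add_zero, smul_eq_mul] at hray
    exact (mul_pos_iff_of_pos_left hcos).1 hray
  have hext : IsExtension a f := by
    refine ⟨hf, ?_, ?_, ?_⟩
    · intro t
      simp only [f]
      rw [cplx_sphPt, hFg]
      rw [show t - α - Real.pi + Real.pi + α = t by ring]
      ring
    · intro x hx
      exact hnocrit x (by simpa using (mem_sphere_zero_iff_norm.1 hx).le)
    · intro i
      rw [hinner]
      constructor
      · intro h
        have hi : i ≠ i0 := by
          rintro rfl
          exact absurd hG2 (not_lt.2 h.le)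
        rw [(hν i).2 (Or.inl h)]
        simpa using hother i hi
      · intro h
        by_cases hi : i = i0
        · subst hi
          rw [(hν i).2 (Or.inr hi0)]
          simpa using hmin0
        · have h1 : a.ν i ≠ 1 := by
            intro h1
            rcases (hν i).1 h1 with h2 | h2
            · linarith
            · exact hi (a.values_distinct i i0 (le_antisymm (h2 _) (hi0 _)))
          rw [(a.nu_sign i).resolve_left h1]
          simpa using hother i hi
  have hempty : critPts f = ∅ := by
    ext x
    simp only [critPts, Set.mem_ofPred_eq, Set.mem_empty_iff_false, iff_false, not_and]
    intro hx
    exact hnocrit x (mem_ball_zero_iff.1 hx).le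
  refine ⟨?_, f, hext, hempty⟩
  refine le_antisymm (sInf_le ⟨f, hext, ?_⟩) zero_le
  rw [hempty, Set.encard_empty]
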